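/- arXiv:2505.01751 — 5 statements merged into one kernel-verified Lean document; each statement's English description precedes it below -/
import Mathlib

section
/- Let f : ℝ^d × ℝ^s → ℝ be twice continuously differentiable, let U ⊆ ℝ^s be open and convex, and let λ : U → ℝ^d be continuously differentiable with ∇_x f(λ(y), y) = 0 for every y ∈ U. Suppose there exist constants c > 0 and M > 0 such that for all y ∈ U: (i) ⟨D²_{xx} f(λ(y), y) v, v⟩ ≥ c‖v‖² for all v ∈ ℝ^d, and (ii) the operator norm of the mixed partial derivative matrix D²_{yx} f(λ(y), y) is at most M. Then λ is Lipschitz on U with Lipschitz constant M/c, i.e., ‖λ(y₁) − λ(y₂)‖ ≤ (M/c)‖y₁ − y₂‖ for all y₁, y₂ ∈ U. -/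
open RealInnerProductSpace

/-!
The curve `y ↦ (lam y, y)` lies in a level set of `G = ∇ₓ f`. Expanding `G` to first order around
a point of the curve, with `D` its derivative there, gives
`D (Δlam, 0) = -D (0, Δy) + o(‖Δlam‖ + ‖Δy‖)`, so for every `ε > 0`,
`(c - ε) ‖Δlam‖ ≤ (M + ε) ‖Δy‖` close to that point. Hence every slope bound larger than `M / c`
holds locally, and a fencing argument along segments makes the bound `M / c` global.
-/

open Filter Set Topology

section LocalSlopeBounds

variable {E F : Type*} [SeminormedAddCommGroup E] [SeminormedAddCommGroup F]

theorem norm_sub_le_of_eventually_slope_le {g : ℝ → E} {a b C : ℝ} (hab : a ≤ b)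
    (hg : ContinuousOn g (Icc a b))
    (hslope : ∀ t ∈ Ico a b, ∀ r > C, ∀ᶠ z in 𝓝[>] t, ‖g z - g t‖ ≤ r * (z - t)) :
    ‖g b - g a‖ ≤ C * (b - a) := by
  refine image_le_of_liminf_slope_right_le_deriv_boundary (f := fun t => ‖g t - g a‖)
    (B := fun t => C * (t - a)) (B' := fun _ => C) (hg.sub continuousOn_const).norm
    (by simp) (by fun_prop) (fun t _ => ?_) (fun t ht r hr => ?_) (right_mem_Icc.2 hab)
  · simpa only [mul_one, id] using! ((hasDerivWithinAt_id t (Ici t)).sub_const a).const_mul C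
  · obtain ⟨q, hCq, hqr⟩ := exists_between hr
    refine Eventually.frequently ?_
    filter_upwards [hslope t ht q hCq, self_mem_nhdsWithin] with z hz htz
    have hincrement : ‖g z - g a‖ - ‖g t - g a‖ ≤ q * (z - t) := by
      refine (norm_sub_norm_le _ _).trans ?_
      rwa [sub_sub_sub_cancel_right]
    rw [slope_def_field]
    exact ((div_le_iff₀ (sub_pos.2 htz)).2 hincrement).trans_lt hqr

theorem continuousWithinAt_of_eventually_norm_sub_le {φ : F → E} {U : Set F} {y : F} {r : ℝ}
    (h : ∀ᶠ z in 𝓝[U] y, ‖φ z - φ y‖ ≤ r * ‖z - y‖) : ContinuousWithinAt φ U y := by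
  refine tendsto_iff_norm_sub_tendsto_zero.2 (squeeze_zero' (by simp) h ?_)
  have hbound : ContinuousWithinAt (fun z => r * ‖z - y‖) U y :=
    Continuous.continuousWithinAt (by fun_prop)
  simpa only [ContinuousWithinAt, sub_self, norm_zero, mul_zero] using hbound

theorem norm_sub_le_of_convex_of_eventually_norm_sub_le [NormedSpace ℝ F] {φ : F → E}
    {U : Set F} {C : ℝ} (hU : Convex ℝ U)
    (hslope : ∀ y ∈ U, ∀ r > C, ∀ᶠ z in 𝓝[U] y, ‖φ z - φ y‖ ≤ r * ‖z - y‖)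
    {x y : F} (hx : x ∈ U) (hy : y ∈ U) : ‖φ y - φ x‖ ≤ C * ‖y - x‖ := by
  have hφ : ContinuousOn φ U := fun z hz =>
    have ⟨r, hr⟩ := exists_gt C
    continuousWithinAt_of_eventually_norm_sub_le (hslope z hz r hr)
  let γ : ℝ → F := AffineMap.lineMap x y
  have hγ : Continuous γ := AffineMap.lineMap_continuous
  have hγU : MapsTo γ (Icc 0 1) U := fun t ht => hU.lineMap_mem hx hy ht
  have hγ_sub (s t : ℝ) : ‖γ s - γ t‖ = |s - t| * ‖y - x‖ := by
    rw [← dist_eq_norm, dist_lineMap_lineMap, Real.dist_eq, dist_comm, dist_eq_norm]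
  suffices ‖φ (γ 1) - φ (γ 0)‖ ≤ C * ‖y - x‖ * (1 - 0) by simpa [γ] using this
  refine norm_sub_le_of_eventually_slope_le (g := φ ∘ γ) zero_le_one
    (hφ.comp hγ.continuousOn hγU) fun t ht r hr => ?_
  obtain ⟨q, hqr, hCq⟩ : ∃ q, q * ‖y - x‖ < r ∧ C < q := by
    have : Tendsto (fun q => q * ‖y - x‖) (𝓝[>] C) (𝓝 (C * ‖y - x‖)) :=
      Continuous.continuousWithinAt (by fun_prop)
    exact ((this.eventually_lt_const hr).and self_mem_nhdsWithin).exists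
  have hIcc : ∀ᶠ z in 𝓝[>] t, z ∈ Icc 0 1 :=
    mem_of_superset (Ioo_mem_nhdsGT ht.2) fun z hz => ⟨ht.1.trans hz.1.le, hz.2.le⟩
  have hγ_tendsto : Tendsto γ (𝓝[>] t) (𝓝[U] γ t) :=
    tendsto_nhdsWithin_iff.2 ⟨hγ.continuousWithinAt, hIcc.mono fun _ => @hγU _⟩
  filter_upwards [hγ_tendsto (hslope _ (hγU ⟨ht.1, ht.2.le⟩) q hCq), self_mem_nhdsWithin]
    with z hz htz
  calc ‖φ (γ z) - φ (γ t)‖ ≤ q * ‖γ z - γ t‖ := hz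
    _ = q * ‖y - x‖ * (z - t) := by rw [hγ_sub, abs_of_pos (sub_pos.2 htz)]; ring
    _ ≤ r * (z - t) := by gcongr; exact sub_nonneg.2 htz.le

end LocalSlopeBounds

section ImplicitFunctions

theorem eventually_norm_sub_le_of_levelSet {𝕜 E F H : Type*} [NontriviallyNormedField 𝕜]
    [NormedAddCommGroup E] [NormedSpace 𝕜 E] [NormedAddCommGroup F] [NormedSpace 𝕜 F]
    [NormedAddCommGroup H] [NormedSpace 𝕜 H]
    {G : E × F → H} {D : E × F →L[𝕜] H} {φ : F → E} {U : Set F} {y₀ : F} {c M K : ℝ}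
    (hG : HasFDerivAt G D (φ y₀, y₀)) (hφ : ContinuousWithinAt φ U y₀)
    (hlevel : ∀ᶠ y in 𝓝[U] y₀, G (φ y, y) = G (φ y₀, y₀))
    (hc : 0 < c) (hD₁ : ∀ v, c * ‖v‖ ≤ ‖D (v, 0)‖) (hD₂ : ∀ w, ‖D (0, w)‖ ≤ M * ‖w‖)
    (hK : M / c < K) :
    ∀ᶠ y in 𝓝[U] y₀, ‖φ y - φ y₀‖ ≤ K * ‖y - y₀‖ := by
  have hD (v : E) (w : F) : c * ‖v‖ ≤ ‖D (v, w)‖ + M * ‖w‖ :=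
    calc c * ‖v‖ ≤ ‖D (v, 0)‖ := hD₁ v
      _ = ‖D (v, w) - D (0, w)‖ := by rw [← map_sub, Prod.mk_sub_mk, sub_zero, sub_self]
      _ ≤ ‖D (v, w)‖ + M * ‖w‖ := (norm_sub_le _ _).trans (by gcongr; exact hD₂ w)
  obtain ⟨ε, ⟨hεc, hεK⟩, hε⟩ : ∃ ε, (ε < c ∧ M + ε < K * (c - ε)) ∧ 0 < ε := by
    have hεK : ∀ᶠ ε in 𝓝 0, M + ε < K * (c - ε) := by
      refine ContinuousAt.eventually_lt (by fun_prop) (by fun_prop) ?_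
      simpa only [add_zero, sub_zero] using (div_lt_iff₀ hc).1 hK
    exact ((((eventually_lt_nhds hc).and hεK).filter_mono nhdsWithin_le_nhds).and
      (self_mem_nhdsWithin (s := Ioi 0))).exists
  have hcurve : Tendsto (fun y => (φ y, y)) (𝓝[U] y₀) (𝓝 (φ y₀, y₀)) :=
    hφ.prodMk_nhds continuousWithinAt_id
  filter_upwards [hlevel, hcurve.eventually (hG.isLittleO.bound hε)] with y hy hyε
  have hlinear : ‖D (φ y - φ y₀, y - y₀)‖ ≤ ε * (‖φ y - φ y₀‖ + ‖y - y₀‖) := by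
    rw [hy, sub_self, zero_sub, norm_neg, Prod.mk_sub_mk] at hyε
    exact hyε.trans (by gcongr; exact max_le_add_of_nonneg (norm_nonneg _) (norm_nonneg _))
  refine le_of_mul_le_mul_left ?_ (sub_pos.2 hεc)
  calc (c - ε) * ‖φ y - φ y₀‖ ≤ (M + ε) * ‖y - y₀‖ := by
        linarith [hD (φ y - φ y₀) (y - y₀)]
    _ ≤ K * (c - ε) * ‖y - y₀‖ := by gcongr
    _ = (c - ε) * (K * ‖y - y₀‖) := by ring

theorem norm_sub_le_of_convex_of_levelSet {E F H : Type*}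
    [NormedAddCommGroup E] [NormedSpace ℝ E] [NormedAddCommGroup F] [NormedSpace ℝ F]
    [NormedAddCommGroup H] [NormedSpace ℝ H]
    {G : E × F → H} {φ : F → E} {U : Set F} {z₀ : H} {c M : ℝ}
    (hU : Convex ℝ U) (hG : ∀ y ∈ U, DifferentiableAt ℝ G (φ y, y)) (hφ : ContinuousOn φ U)
    (hlevel : ∀ y ∈ U, G (φ y, y) = z₀) (hc : 0 < c)
    (hG₁ : ∀ y ∈ U, ∀ v, c * ‖v‖ ≤ ‖fderiv ℝ (fun x => G (x, y)) (φ y) v‖)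
    (hG₂ : ∀ y ∈ U, ‖fderiv ℝ (fun y' => G (φ y, y')) y‖ ≤ M)
    {y₁ y₂ : F} (hy₁ : y₁ ∈ U) (hy₂ : y₂ ∈ U) :
    ‖φ y₁ - φ y₂‖ ≤ M / c * ‖y₁ - y₂‖ := by
  refine norm_sub_le_of_convex_of_eventually_norm_sub_le hU (fun y hy K hK => ?_) hy₂ hy₁
  have hD := (hG y hy).hasFDerivAt
  have hD₁ := hD.comp (φ y) (hasFDerivAt_prodMk_left (𝕜 := ℝ) (φ y) y)
  have hD₂ := hD.comp y (hasFDerivAt_prodMk_right (𝕜 := ℝ) (φ y) y)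
  refine eventually_norm_sub_le_of_levelSet hD (hφ y hy) ?_ hc (fun v => ?_) (fun w => ?_) hK
  · filter_upwards [self_mem_nhdsWithin] with z hz
    rw [hlevel z hz, hlevel y hy]
  · exact (hG₁ y hy v).trans_eq (congrArg (fun L => ‖L v‖) hD₁.fderiv)
  · exact (congrArg (fun L => ‖L w‖) hD₂.fderiv).symm.trans_le
      (ContinuousLinearMap.le_of_opNorm_le _ (hG₂ y hy) w)

end ImplicitFunctions

section CriticalPoints

variable {E : Type*} [NormedAddCommGroup E] [InnerProductSpace ℝ E]

theorem mul_norm_le_norm_of_mul_sq_norm_le_inner {c : ℝ} {u v : E}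
    (h : c * ‖v‖ ^ 2 ≤ ⟪u, v⟫) : c * ‖v‖ ≤ ‖u‖ := by
  rcases (norm_nonneg v).eq_or_lt with hv | hv
  · simp [← hv]
  · refine le_of_mul_le_mul_right ?_ hv
    calc c * ‖v‖ * ‖v‖ = c * ‖v‖ ^ 2 := by ring
      _ ≤ ⟪u, v⟫ := h
      _ ≤ ‖u‖ * ‖v‖ := real_inner_le_norm u v

variable {F : Type*} [CompleteSpace E] [NormedAddCommGroup F] [NormedSpace ℝ F]

theorem contDiffAt_partial_gradient {f : E → F → ℝ} {p : E × F} {m n : WithTop ℕ∞}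
    (hf : ContDiffAt ℝ n (fun q : E × F => f q.1 q.2) p) (hmn : m + 1 ≤ n) :
    ContDiffAt ℝ m (fun q : E × F => gradient (fun x => f x q.2) q.1) p := by
  have hf_swap : ContDiffAt ℝ n (fun q : (E × F) × E => f q.2 q.1.2) (p, p.1) :=
    hf.comp (p, p.1) (f := fun q : (E × F) × E => (q.2, q.1.2)) (by fun_prop)
  exact (InnerProductSpace.toDual ℝ E).symm.toContinuousLinearEquiv.contDiff.contDiffAt.comp p
    (ContDiffAt.fderiv (f := fun (q : E × F) x => f x q.2) hf_swap contDiffAt_fst hmn)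

theorem minimizer_map_lipschitz_general (f : E → F → ℝ) {U : Set F} (hU : Convex ℝ U)
    {lam : F → E} (hf : ∀ y ∈ U, ContDiffAt ℝ 2 (fun p : E × F => f p.1 p.2) (lam y, y))
    (hlam : ContinuousOn lam U) (hcrit : ∀ y ∈ U, gradient (fun x => f x y) (lam y) = 0)
    {c M : ℝ} (hc : 0 < c)
    (hHess : ∀ y ∈ U, ∀ v,
      c * ‖v‖ ≤ ‖fderiv ℝ (fun x => gradient (fun x' => f x' y) x) (lam y) v‖)
    (hmix : ∀ y ∈ U, ‖fderiv ℝ (fun y' => gradient (fun x' => f x' y') (lam y)) y‖ ≤ M) :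
    ∀ y₁ ∈ U, ∀ y₂ ∈ U, ‖lam y₁ - lam y₂‖ ≤ (M / c) * ‖y₁ - y₂‖ := by
  have hgrad : ∀ y ∈ U,
      DifferentiableAt ℝ (fun q : E × F => gradient (fun x => f x q.2) q.1) (lam y, y) :=
    fun y hy => (contDiffAt_partial_gradient (hf y hy) one_add_one_eq_two.le).differentiableAt
      one_ne_zero
  exact fun _ hy₁ _ hy₂ =>
    norm_sub_le_of_convex_of_levelSet hU hgrad hlam hcrit hc hHess hmix hy₁ hy₂

end CriticalPoints

/-- If `lam y` is a critical point of `f(·, y)` for `y` in an open convex set `U`, the partial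
Hessian `D²ₓₓ f(lam y, y)` is uniformly positive definite (`⟪D²ₓₓ f v, v⟫ ≥ c ‖v‖²`) and the
mixed second derivative `D²_{yx} f(lam y, y)` has operator norm at most `M` on `U`, then
`lam` is Lipschitz on `U` with constant `M / c`. -/
theorem minimizer_map_lipschitz
    {d s : ℕ}
    (f : EuclideanSpace ℝ (Fin d) → EuclideanSpace ℝ (Fin s) → ℝ)
    (hf : ContDiff ℝ 2 (fun p : EuclideanSpace ℝ (Fin d) × EuclideanSpace ℝ (Fin s) =>
      f p.1 p.2))
    (U : Set (EuclideanSpace ℝ (Fin s))) (hUopen : IsOpen U) (hUconv : Convex ℝ U)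
    (lam : EuclideanSpace ℝ (Fin s) → EuclideanSpace ℝ (Fin d))
    (hlam : ContDiffOn ℝ 1 lam U)
    (hcrit : ∀ y ∈ U, gradient (fun x => f x y) (lam y) = 0)
    (c M : ℝ) (hc : 0 < c) (hM : 0 < M)
    (hHess : ∀ y ∈ U, ∀ v : EuclideanSpace ℝ (Fin d),
      c * ‖v‖ ^ 2 ≤ ⟪fderiv ℝ (fun x => gradient (fun x' => f x' y) x) (lam y) v, v⟫)
    (hmix : ∀ y ∈ U,
      ‖fderiv ℝ (fun y' => gradient (fun x' => f x' y') (lam y)) y‖ ≤ M) :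
    ∀ y₁ ∈ U, ∀ y₂ ∈ U, ‖lam y₁ - lam y₂‖ ≤ (M / c) * ‖y₁ - y₂‖ := by
  exact minimizer_map_lipschitz_general f hUconv (fun _ _ => hf.contDiffAt) hlam.continuousOn
    hcrit hc (fun y hy v => mul_norm_le_norm_of_mul_sq_norm_le_inner (hHess y hy v)) hmix
end

section
/- Let g : ℝ^s → ℝ be continuously differentiable, suppose every sublevel set {y : g(y) ≤ c} is compact, and suppose g has a unique critical point y* (i.e., ∇g(y) = 0 if and only if y = y*). Then every solution y : [0,∞) → ℝ^s of the gradient flow y′(t) = −∇g(y(t)) converges to y* as t → ∞. -/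
/-!
Along a solution of `y' = -∇g(y)` the energy satisfies `(g ∘ y)' = -‖∇g(y)‖²`, so `g ∘ y`
decreases. Every accumulation point `z` of `y` at `∞` is critical: otherwise `‖∇g‖ > δ > 0` on a
ball around `z`, and since distance travelled inside this ball costs energy at rate at least `δ`
while `g ∘ y` never drops below `g z`, a solution that comes close enough to `z` can never
leave the ball again. It would then lose energy at rate `δ²` forever, which is absurd. A solution
staying in a compact set, such as the initial sublevel set, and having only one possible
accumulation point converges to it.
-/

open Filter Metric Set Topology
open scoped Gradient

section

variable {E : Type*} [NormedAddCommGroup E] [InnerProductSpace ℝ E] [CompleteSpace E]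
  {g : E → ℝ} {y : ℝ → E} {I : Set ℝ}

theorem continuous_gradient_of_contDiff (hg : ContDiff ℝ 1 g) : Continuous (∇ g) :=
  (InnerProductSpace.toDual ℝ E).symm.continuous.comp (hg.continuous_fderiv one_ne_zero)

/-- The curve `y` solves the gradient flow equation `y' = -∇ g y` at all times in `I`, with
derivatives taken within `I`, hence one-sided at an endpoint of an interval. -/
def IsGradientFlowOn (g : E → ℝ) (y : ℝ → E) (I : Set ℝ) : Prop :=
  IsIntegralCurveOn y (fun _ x ↦ -∇ g x) I

namespace IsGradientFlowOn

theorem mono {J : Set ℝ} (hy : IsGradientFlowOn g y I) (hJ : J ⊆ I) : IsGradientFlowOn g y J :=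
  IsIntegralCurveOn.mono hy hJ

theorem hasDerivWithinAt_comp (hy : IsGradientFlowOn g y I) {t : ℝ} (ht : t ∈ I)
    (hg : DifferentiableAt ℝ g (y t)) :
    HasDerivWithinAt (fun s ↦ g (y s)) (-‖∇ g (y t)‖ ^ 2) I t := by
  have h := hg.hasFDerivAt.comp_hasDerivWithinAt t (hy t ht)
  rwa [← inner_gradient_left, inner_neg_right, real_inner_self_eq_norm_sq] at h

theorem mul_sub_le_of_le_sq_norm_gradient (hy : IsGradientFlowOn g y I) (hI : Convex ℝ I)
    (hg : Differentiable ℝ g) {m : ℝ} (hm : ∀ t ∈ I, m ≤ ‖∇ g (y t)‖ ^ 2) {a b : ℝ}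
    (ha : a ∈ I) (hb : b ∈ I) (hab : a ≤ b) : m * (b - a) ≤ g (y a) - g (y b) := by
  have hder (t) (ht : t ∈ I) := hy.hasDerivWithinAt_comp ht (hg (y t))
  have hder' (t) (ht : t ∈ interior I) :=
    (hder t (interior_subset ht)).hasDerivAt (mem_interior_iff_mem_nhds.1 ht)
  have h := hI.image_sub_le_mul_sub_of_deriv_le (C := -m)
    (fun t ht ↦ (hder t ht).continuousWithinAt)
    (fun t ht ↦ (hder' t ht).differentiableAt.differentiableWithinAt)
    (fun t ht ↦ (hder' t ht).deriv.trans_le (neg_le_neg (hm t (interior_subset ht)))) a ha b hb hab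
  linarith

theorem antitoneOn_comp (hy : IsGradientFlowOn g y I) (hI : Convex ℝ I)
    (hg : Differentiable ℝ g) : AntitoneOn (fun t ↦ g (y t)) I := fun a ha b hb hab ↦ by
  simpa using hy.mul_sub_le_of_le_sq_norm_gradient hI hg (fun _ _ ↦ sq_nonneg _) ha hb hab

theorem le_of_mapClusterPt {a : ℝ} (hy : IsGradientFlowOn g y (Ici a)) (hg : Differentiable ℝ g)
    {z : E} (hz : MapClusterPt z atTop y) {t : ℝ} (ht : a ≤ t) : g z ≤ g (y t) :=
  (isClosed_le hg.continuous continuous_const).mem_of_mapClusterPt hz <|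
    eventually_atTop.2 ⟨t, fun _ hts ↦
      hy.antitoneOn_comp (convex_Ici a) hg ht (ht.trans hts) hts⟩

theorem mul_norm_sub_le_of_lt_norm_gradient {a b : ℝ} (hy : IsGradientFlowOn g y (Icc a b))
    (hg : Differentiable ℝ g) (hab : a ≤ b) {δ r : ℝ} (hδ : 0 < δ)
    (hgrad : ∀ x ∈ ball (y a) r, δ < ‖∇ g x‖) (hdrop : g (y a) - g (y b) < δ * r) :
    δ * ‖y b - y a‖ ≤ g (y a) - g (y b) := by
  have hdist (s) (hs : s ∈ Icc a b) :
      HasDerivWithinAt (fun s ↦ y s - y a) (-∇ g (y s)) (Icc a b) s :=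
    (hy s hs).sub_const (y a)
  have hbound (s) (hs : s ∈ Icc a b) :
      HasDerivWithinAt (fun s ↦ (g (y a) - g (y s)) / δ) (‖∇ g (y s)‖ ^ 2 / δ) (Icc a b) s := by
    simpa using ((hy.hasDerivWithinAt_comp hs (hg (y s))).const_sub (g (y a))).div_const δ
  -- The speed only has to be compared with the bound at times when the distance attains it, and
  -- at such times the bound itself keeps `y s` inside the ball.
  have hspeed (s) (hs : s ∈ Ico a b) (heq : ‖y s - y a‖ = (g (y a) - g (y s)) / δ) :
      ‖-∇ g (y s)‖ < ‖∇ g (y s)‖ ^ 2 / δ := by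
    have hanti : g (y b) ≤ g (y s) := hy.antitoneOn_comp (convex_Icc a b) hg
      (Ico_subset_Icc_self hs) (right_mem_Icc.2 hab) hs.2.le
    have hball : y s ∈ ball (y a) r := by
      rw [mem_ball_iff_norm, heq, div_lt_iff₀' hδ]
      linarith
    have hlt : δ < ‖∇ g (y s)‖ := hgrad _ hball
    rw [norm_neg, lt_div_iff₀ hδ, sq]
    exact mul_lt_mul_of_pos_left hlt (hδ.trans hlt)
  rw [← le_div_iff₀' hδ]
  exact image_norm_le_of_norm_deriv_right_lt_deriv_boundary'
    (fun s hs ↦ (hdist s hs).continuousWithinAt)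
    (fun s hs ↦ (hdist s (Ico_subset_Icc_self hs)).mono_of_mem_nhdsWithin
      (Icc_mem_nhdsGE_of_mem hs))
    (by simp)
    (fun s hs ↦ (hbound s hs).continuousWithinAt)
    (fun s hs ↦ (hbound s (Ico_subset_Icc_self hs)).mono_of_mem_nhdsWithin
      (Icc_mem_nhdsGE_of_mem hs))
    hspeed (right_mem_Icc.2 hab)

theorem exists_mul_le_sub_of_lt_norm_gradient {a : ℝ} (hy : IsGradientFlowOn g y (Ici a))
    (hg : Differentiable ℝ g) {δ r : ℝ} (hδ : 0 < δ) (hgrad : ∀ x ∈ ball (y a) r, δ < ‖∇ g x‖) :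
    ∃ t, a ≤ t ∧ δ * r ≤ g (y a) - g (y t) := by
  by_contra! hdrop
  have hball (t) (ht : a ≤ t) : y t ∈ ball (y a) r := by
    have hdist := (hy.mono Icc_subset_Ici_self).mul_norm_sub_le_of_lt_norm_gradient hg ht hδ hgrad
      (hdrop t ht)
    rw [mem_ball_iff_norm]
    exact lt_of_mul_lt_mul_left (hdist.trans_lt (hdrop t ht)) hδ.le
  have hr : 0 < r := pos_of_mem_ball (hball a le_rfl)
  have hspeed (t) (ht : t ∈ Ici a) : δ ^ 2 ≤ ‖∇ g (y t)‖ ^ 2 :=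
    pow_le_pow_left₀ hδ.le (hgrad _ (hball t ht)).le 2
  have hT : a ≤ a + r / δ := le_add_of_nonneg_right (by positivity)
  have hloss : δ * r ≤ g (y a) - g (y (a + r / δ)) :=
    calc δ * r = δ ^ 2 * (a + r / δ - a) := by field_simp; ring
      _ ≤ _ := hy.mul_sub_le_of_le_sq_norm_gradient (convex_Ici a) hg hspeed self_mem_Ici hT hT
  exact (hdrop _ hT).not_ge hloss

theorem gradient_eq_zero_of_mapClusterPt {a : ℝ} (hy : IsGradientFlowOn g y (Ici a))
    (hg : Differentiable ℝ g) {z : E} (hgrad : ContinuousAt (∇ g) z)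
    (hz : MapClusterPt z atTop y) : ∇ g z = 0 := by
  by_contra hne
  obtain ⟨δ, hδ, hδz⟩ := exists_between (norm_pos_iff.2 hne)
  obtain ⟨r, hr, hball⟩ := Metric.eventually_nhds_iff_ball.1 (hgrad.norm.eventually_const_lt hδz)
  have hnear : ∀ᶠ x in 𝓝 z, g x < g z + δ * (r / 2) ∧ x ∈ ball z (r / 2) :=
    (hg.continuous.continuousAt.eventually_lt_const
      (lt_add_of_pos_right _ (by positivity))).and (ball_mem_nhds z (half_pos hr))
  obtain ⟨t, ⟨henergy, htz⟩, hat⟩ :=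
    ((hz.frequently hnear).and_eventually (eventually_ge_atTop a)).exists
  have hsub : ball (y t) (r / 2) ⊆ ball z r := ball_subset_ball' (by linarith [mem_ball.1 htz])
  obtain ⟨T, htT, hdrop⟩ :=
    (hy.mono (Ici_subset_Ici.2 hat)).exists_mul_le_sub_of_lt_norm_gradient hg hδ
      fun x hx ↦ hball x (hsub hx)
  have hmin : g z ≤ g (y T) := hy.le_of_mapClusterPt hg hz (hat.trans htT)
  linarith

end IsGradientFlowOn

theorem gradient_flow_converges_to_unique_critical_point_general
    (hg : ContDiff ℝ 1 g) {a : ℝ} (hy : IsGradientFlowOn g y (Ici a)) {K : Set E}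
    (hK : IsCompact K) (hyK : ∀ᶠ t in atTop, y t ∈ K) {ystar : E}
    (hcrit : ∀ x ∈ K, ∇ g x = 0 → x = ystar) : Tendsto y atTop (𝓝 ystar) :=
  hK.tendsto_nhds_of_unique_mapClusterPt hyK fun x hx hcluster ↦
    hcrit x hx (hy.gradient_eq_zero_of_mapClusterPt (hg.differentiable one_ne_zero)
      (continuous_gradient_of_contDiff hg).continuousAt hcluster)

end

/-- If `g` is `C¹` with compact sublevel sets and a unique critical point `y*`, then every
solution of the gradient flow `y' = -∇g(y)` on `[0, ∞)` converges to `y*`. -/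
theorem gradient_flow_converges_to_unique_critical_point
    {s : ℕ}
    (g : EuclideanSpace ℝ (Fin s) → ℝ) (hg : ContDiff ℝ 1 g)
    (hsub : ∀ c : ℝ, IsCompact {y : EuclideanSpace ℝ (Fin s) | g y ≤ c})
    (ystar : EuclideanSpace ℝ (Fin s))
    (hcrit : ∀ y : EuclideanSpace ℝ (Fin s), gradient g y = 0 ↔ y = ystar)
    (y : ℝ → EuclideanSpace ℝ (Fin s))
    (hy : ∀ t ∈ Set.Ici (0 : ℝ),
      HasDerivWithinAt y (-(gradient g (y t))) (Set.Ici 0) t) :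
    Filter.Tendsto y Filter.atTop (nhds ystar) := by
  have hflow : IsGradientFlowOn g y (Set.Ici 0) := hy
  exact gradient_flow_converges_to_unique_critical_point_general hg hflow (hsub (g (y 0)))
    (eventually_atTop.2 ⟨0, fun _ ht ↦ hflow.antitoneOn_comp (convex_Ici 0)
      (hg.differentiable one_ne_zero) self_mem_Ici ht ht⟩) fun x _ ↦ (hcrit x).1
end

section
/- Let f : ℝ^d × ℝ^s → ℝ be continuously differentiable and let λ : ℝ^s → ℝ^d be differentiable such that for every y ∈ ℝ^s and every x ∈ ℝ^d one has f(λ(y), y) ≤ f(x, y). Set g(y) := f(λ(y), y). Suppose every sublevel set {y : g(y) ≤ c} is compact and g has a unique critical point y*. Then every solution y : [0,∞) → ℝ^s of the ODE y′(t) = −∇_y f(λ(y(t)), y(t)) converges to y* as t → ∞, and λ(y(t)) → λ(y*) as t → ∞. -/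
/-!
Comparing `λ(y)` with the competitor `λ(w)`, and vice versa, sandwiches the increment of
`g(y) = f(λ(y), y)` between increments of `f` in its second variable alone. Hence
`∇g(y) = ∇_y f(λ(y), y)` for continuous `λ`, and the ODE is the gradient flow of `g`. Along it
`g` decreases at rate `‖∇g‖²`. In a compact set `g` is bounded below and this rate is uniformly
continuous in time, so it tends to zero by Barbalat's lemma. Every cluster point of the trajectory
is therefore critical, and a trajectory in a compact set with a single possible cluster point
converges to it.
-/

open Set Filter Topology
open scoped Gradient

section Barbalat

variable {E : Type*} [NormedAddCommGroup E] [NormedSpace ℝ E] {φ φ' : ℝ → E}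

theorem norm_sub_sub_smul_deriv_le {a b C : ℝ} (hab : a ≤ b)
    (hφ : ∀ t ∈ Icc a b, HasDerivWithinAt φ (φ' t) (Icc a b) t)
    (hC : ∀ t ∈ Ico a b, ‖φ' t - φ' a‖ ≤ C) :
    ‖φ b - φ a - (b - a) • φ' a‖ ≤ C * (b - a) := by
  have hderiv : ∀ t ∈ Icc a b,
      HasDerivWithinAt (fun u ↦ φ u - u • φ' a) (φ' t - φ' a) (Icc a b) t := fun t ht ↦ by
    simpa only [one_smul, id] using
      (hφ t ht).fun_sub ((hasDerivWithinAt_id t (Icc a b)).smul_const (φ' a))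
  have hle := norm_image_sub_le_of_norm_deriv_le_segment' hderiv hC b (right_mem_Icc.2 hab)
  rwa [sub_sub_sub_comm, ← sub_smul] at hle

/-- **Barbalat's lemma**. -/
theorem tendsto_deriv_zero_of_uniformContinuousOn {a : ℝ} {ℓ : E}
    (hφ : ∀ t ∈ Ici a, HasDerivWithinAt φ (φ' t) (Ici a) t)
    (hφ' : UniformContinuousOn φ' (Ici a)) (hℓ : Tendsto φ atTop (𝓝 ℓ)) :
    Tendsto φ' atTop (𝓝 0) := by
  rw [NormedAddGroup.tendsto_nhds_zero]
  intro ε hε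
  obtain ⟨δ, hδ, hφ'δ⟩ := Metric.uniformContinuousOn_iff_le.1 hφ' (ε / 2) (half_pos hε)
  have hincrement : Tendsto (fun t ↦ φ (t + δ) - φ t) atTop (𝓝 0) := by
    simpa only [sub_self, Function.comp_def, id] using
      (hℓ.comp (tendsto_atTop_add_const_right atTop δ tendsto_id)).sub hℓ
  have hsmall := NormedAddGroup.tendsto_nhds_zero.1 hincrement (ε / 2 * δ) (by positivity)
  filter_upwards [hsmall, eventually_ge_atTop a] with t hsmall_t hat
  have hIcc : Icc t (t + δ) ⊆ Ici a := Icc_subset_Ici_self.trans (Ici_subset_Ici.2 hat)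
  have haffine : ‖φ (t + δ) - φ t - δ • φ' t‖ ≤ ε / 2 * δ := by
    have hle := norm_sub_sub_smul_deriv_le (C := ε / 2) (le_add_of_nonneg_right hδ.le)
      (fun u hu ↦ (hφ u (hIcc hu)).mono hIcc) fun u hu ↦ by
        rw [← dist_eq_norm]
        refine hφ'δ u (hIcc (Ico_subset_Icc_self hu)) t hat ?_
        rw [Real.dist_eq, abs_of_nonneg] <;> linarith [hu.1, hu.2]
    rwa [add_sub_cancel_left] at hle
  have hδφ' : δ * ‖φ' t‖ < δ * ε := calc
    δ * ‖φ' t‖ = ‖δ • φ' t‖ := by rw [norm_smul, Real.norm_of_nonneg hδ.le]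
    _ ≤ ‖φ (t + δ) - φ t‖ + ‖φ (t + δ) - φ t - δ • φ' t‖ := norm_le_insert _ _
    _ < ε / 2 * δ + ε / 2 * δ := add_lt_add_of_lt_of_le hsmall_t haffine
    _ = δ * ε := by ring
  exact lt_of_mul_lt_mul_left hδφ' hδ.le

end Barbalat

section Limits

theorem exists_tendsto_of_antitoneOn_Ici {φ : ℝ → ℝ} {a : ℝ} (hφ : AntitoneOn φ (Ici a))
    (hbdd : BddBelow (φ '' Ici a)) : ∃ ℓ, Tendsto φ atTop (𝓝 ℓ) := by
  have hanti : Antitone fun t ↦ φ (max t a) := fun t u htu ↦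
    hφ (le_max_right t a) (le_max_right u a) (max_le_max_right a htu)
  have hrange : BddBelow (range fun t ↦ φ (max t a)) :=
    hbdd.mono (range_subset_iff.2 fun t ↦ mem_image_of_mem φ (le_max_right t a))
  refine ⟨_, (tendsto_atTop_ciInf hanti hrange).congr' ?_⟩
  filter_upwards [eventually_ge_atTop a] with t ht
  rw [max_eq_left ht]

theorem tendsto_nhds_of_tendsto_comp_of_isCompact {ι X Y : Type*} [TopologicalSpace X]
    [TopologicalSpace Y] [T2Space Y] {l : Filter ι} {u : ι → X} {K : Set X} {h : X → Y}
    {x₀ : X} {c : Y} (hK : IsCompact K) (huK : ∀ᶠ i in l, u i ∈ K) (hh : ContinuousOn h K)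
    (hlim : Tendsto (h ∘ u) l (𝓝 c)) (hx₀ : ∀ x ∈ K, h x = c → x = x₀) :
    Tendsto u l (𝓝 x₀) := by
  refine hK.tendsto_nhds_of_unique_mapClusterPt huK fun x hxK hx ↦ hx₀ x hxK ?_
  have hcluster : MapClusterPt (h x) l (h ∘ u) :=
    hx.tendsto_comp' ((hh x hxK).mono_left (inf_le_inf_left _ (le_principal_iff.2 huK)))
  have : (𝓝 (h x) ⊓ 𝓝 c).NeBot := hcluster.clusterPt.mono hlim
  exact eq_of_nhds_neBot this

end Limits

section GradientFlow

variable {F : Type*} [NormedAddCommGroup F] [InnerProductSpace ℝ F] [CompleteSpace F]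

/-- The curve `y` solves the gradient-flow equation `y' = -∇g(y)` on `[0, ∞)`. The derivative at
`0` is one-sided, and the values of `y` at negative times are unconstrained. -/
def IsGradientFlow (g : F → ℝ) (y : ℝ → F) : Prop :=
  ∀ t ∈ Ici (0 : ℝ), HasDerivWithinAt y (-∇ g (y t)) (Ici 0) t

namespace IsGradientFlow

variable {g : F → ℝ} {y : ℝ → F} {K : Set F}

theorem hasDerivWithinAt_comp (hy : IsGradientFlow g y) (hg : Differentiable ℝ g) {t : ℝ}
    (ht : t ∈ Ici 0) : HasDerivWithinAt (g ∘ y) (-‖∇ g (y t)‖ ^ 2) (Ici 0) t := by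
  have hchain := (hg (y t)).hasFDerivAt.comp_hasDerivWithinAt t (hy t ht)
  rwa [← inner_gradient_left, inner_neg_right, real_inner_self_eq_norm_sq] at hchain

theorem antitoneOn_comp (hy : IsGradientFlow g y) (hg : Differentiable ℝ g) :
    AntitoneOn (g ∘ y) (Ici 0) :=
  antitoneOn_of_hasDerivWithinAt_nonpos (convex_Ici 0)
    (fun _ ht ↦ (hy.hasDerivWithinAt_comp hg ht).continuousWithinAt)
    (fun _ ht ↦ (hy.hasDerivWithinAt_comp hg (interior_subset ht)).mono interior_subset)
    fun _ _ ↦ neg_nonpos.2 (sq_nonneg _)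

theorem uniformContinuousOn (hy : IsGradientFlow g y) (hK : IsCompact K)
    (hyK : MapsTo y (Ici 0) K) (hg' : ContinuousOn (∇ g) K) :
    UniformContinuousOn y (Ici 0) := by
  obtain ⟨C, hC⟩ := hK.exists_bound_of_continuousOn hg'
  have hspeed : ∀ t ∈ Ici (0 : ℝ), ‖-∇ g (y t)‖₊ ≤ C.toNNReal := fun t ht ↦ by
    rw [nnnorm_neg]
    exact NNReal.le_toNNReal_of_coe_le (hC (y t) (hyK ht))
  exact ((convex_Ici 0).lipschitzOnWith_of_nnnorm_hasDerivWithin_le hy hspeed).uniformContinuousOn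

theorem tendsto_gradient (hy : IsGradientFlow g y) (hg : Differentiable ℝ g) (hK : IsCompact K)
    (hyK : MapsTo y (Ici 0) K) (hg' : ContinuousOn (∇ g) K) :
    Tendsto (∇ g ∘ y) atTop (𝓝 0) := by
  have hbdd : BddBelow ((g ∘ y) '' Ici 0) :=
    (hK.bddBelow_image hg.continuous.continuousOn).mono <| by
      rw [image_comp]
      exact image_mono hyK.image_subset
  obtain ⟨ℓ, hℓ⟩ := exists_tendsto_of_antitoneOn_Ici (hy.antitoneOn_comp hg) hbdd
  have hrate : UniformContinuousOn (fun t ↦ -‖∇ g (y t)‖ ^ 2) (Ici 0) :=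
    (hK.uniformContinuousOn_of_continuous (hg'.norm.pow 2).neg).comp
      (hy.uniformContinuousOn hK hyK hg') hyK
  have hsq : Tendsto (fun t ↦ -‖∇ g (y t)‖ ^ 2) atTop (𝓝 0) :=
    tendsto_deriv_zero_of_uniformContinuousOn (fun _ ↦ hy.hasDerivWithinAt_comp hg) hrate hℓ
  refine tendsto_zero_iff_norm_tendsto_zero.2 ?_
  simpa using hsq.neg.sqrt

theorem tendsto_nhds_of_unique_critical (hy : IsGradientFlow g y) (hg : Differentiable ℝ g)
    (hK : IsCompact K) (hyK : MapsTo y (Ici 0) K) (hg' : ContinuousOn (∇ g) K) {z₀ : F}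
    (hcrit : ∀ z ∈ K, ∇ g z = 0 → z = z₀) : Tendsto y atTop (𝓝 z₀) :=
  tendsto_nhds_of_tendsto_comp_of_isCompact hK ((eventually_ge_atTop 0).mono hyK) hg'
    (hy.tendsto_gradient hg hK hyK hg') hcrit

end IsGradientFlow

end GradientFlow

section ValueFunction

/-- The function `y ↦ f(λ(y), y)`; it equals `y ↦ min_x f(x, y)` when each `λ(y)` minimizes
`f(·, y)`. -/
def valueFunction {E F : Type*} (f : E → F → ℝ) (lam : F → E) (y : F) : ℝ :=
  f (lam y) y

variable {E F : Type*} [NormedAddCommGroup E] [NormedSpace ℝ E] [NormedAddCommGroup F]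

theorem isLittleO_increment_snd {G : Type*} [NormedAddCommGroup G] [NormedSpace ℝ F]
    [NormedSpace ℝ G] {f : E → F → G} {x : F → E} {y₀ : F} {L : E × F →L[ℝ] G}
    (hf : HasStrictFDerivAt (fun p : E × F ↦ f p.1 p.2) L (x y₀, y₀)) (hx : ContinuousAt x y₀) :
    (fun y ↦ f (x y) y - f (x y) y₀ - L (0, y - y₀)) =o[𝓝 y₀] fun y ↦ y - y₀ := by
  have hpair : Tendsto (fun y ↦ ((x y, y), (x y, y₀))) (𝓝 y₀) (𝓝 ((x y₀, y₀), (x y₀, y₀))) :=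
    (hx.prodMk continuousAt_id).prodMk (hx.prodMk continuousAt_const)
  have hincrement := hf.isLittleO.comp_tendsto hpair
  simp only [Function.comp_def, Prod.mk_sub_mk, sub_self] at hincrement
  exact hincrement.trans_isBigO (Asymptotics.isBigO_of_le _ fun y ↦ by simp [Prod.norm_mk])

/-- **Envelope theorem**. -/
theorem hasFDerivAt_valueFunction [NormedSpace ℝ F] {f : E → F → ℝ} {lam : F → E} {y₀ : F}
    {L : E × F →L[ℝ] ℝ} (hf : HasStrictFDerivAt (fun p : E × F ↦ f p.1 p.2) L (lam y₀, y₀))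
    (hlam : ContinuousAt lam y₀) (hmin : ∀ y x, f (lam y) y ≤ f x y) :
    HasFDerivAt (valueFunction f lam) (L.comp (.inr ℝ E F)) y₀ := by
  have hmoving := isLittleO_increment_snd hf hlam
  have hfixed := isLittleO_increment_snd (x := fun _ ↦ lam y₀) hf continuousAt_const
  have hlower (y : F) : f (lam y) y - f (lam y) y₀ - L (0, y - y₀) ≤
      valueFunction f lam y - valueFunction f lam y₀ - L (0, y - y₀) :=
    sub_le_sub_right (sub_le_sub_left (hmin y₀ (lam y)) _) _
  have hupper (y : F) : valueFunction f lam y - valueFunction f lam y₀ - L (0, y - y₀) ≤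
      f (lam y₀) y - f (lam y₀) y₀ - L (0, y - y₀) :=
    sub_le_sub_right (sub_le_sub_right (hmin y (lam y₀)) _) _
  refine .of_isLittleO ((Asymptotics.IsBigO.of_norm_le fun y ↦ ?_).trans_isLittleO
    (hmoving.norm_left.add hfixed.norm_left))
  exact (abs_le_max_abs_abs (hlower y) (hupper y)).trans
    (max_le_add_of_nonneg (abs_nonneg _) (abs_nonneg _))

variable {f : E → F → ℝ} {lam : F → E}

theorem differentiable_valueFunction [NormedSpace ℝ F]
    (hf : ContDiff ℝ 1 fun p : E × F ↦ f p.1 p.2) (hlam : Continuous lam)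
    (hmin : ∀ y x, f (lam y) y ≤ f x y) : Differentiable ℝ (valueFunction f lam) := fun _ ↦
  (hasFDerivAt_valueFunction (hf.hasStrictFDerivAt one_ne_zero) hlam.continuousAt
    hmin).differentiableAt

variable [InnerProductSpace ℝ F] [CompleteSpace F]

theorem gradient_valueFunction (hf : ContDiff ℝ 1 fun p : E × F ↦ f p.1 p.2)
    (hlam : Continuous lam) (hmin : ∀ y x, f (lam y) y ≤ f x y) (y : F) :
    ∇ (valueFunction f lam) y = ∇ (f (lam y)) y := by
  have hstrict := hf.hasStrictFDerivAt (x := (lam y, y)) one_ne_zero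
  have hpartial : HasFDerivAt (f (lam y)) _ y :=
    hstrict.hasFDerivAt.comp y (hasFDerivAt_prodMk_right (lam y) y)
  have hvalue := hasFDerivAt_valueFunction hstrict hlam.continuousAt hmin
  rw [gradient, gradient, hvalue.fderiv, hpartial.fderiv]

theorem continuous_gradient_valueFunction (hf : ContDiff ℝ 1 fun p : E × F ↦ f p.1 p.2)
    (hlam : Continuous lam) (hmin : ∀ y x, f (lam y) y ≤ f x y) :
    Continuous (∇ (valueFunction f lam)) := by
  have hpartial : Continuous fun p : E × F ↦ fderiv ℝ (f p.1) p.2 :=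
    Continuous.fderiv_one (f := fun p : E × F ↦ f p.1)
      (hf.comp ((contDiff_fst.comp contDiff_fst).prodMk contDiff_snd)) continuous_snd
  rw [funext (gradient_valueFunction hf hlam hmin)]
  exact (InnerProductSpace.toDual ℝ F).symm.continuous.comp
    (hpartial.comp (hlam.prodMk continuous_id))

theorem isGradientFlow_valueFunction (hf : ContDiff ℝ 1 fun p : E × F ↦ f p.1 p.2)
    (hlam : Continuous lam) (hmin : ∀ y x, f (lam y) y ≤ f x y) {y : ℝ → F}
    (hy : ∀ t ∈ Ici (0 : ℝ), HasDerivWithinAt y (-∇ (f (lam (y t))) (y t)) (Ici 0) t) :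
    IsGradientFlow (valueFunction f lam) y := fun t ht ↦ by
  rw [gradient_valueFunction hf hlam hmin]
  exact hy t ht

theorem slow_ode_converges_general (hf : ContDiff ℝ 1 fun p : E × F ↦ f p.1 p.2)
    (hlam : Continuous lam) (hmin : ∀ y x, f (lam y) y ≤ f x y)
    {K : Set F} (hK : IsCompact K) {ystar : F}
    (hcrit : ∀ z ∈ K, ∇ (valueFunction f lam) z = 0 → z = ystar) {y : ℝ → F}
    (hyK : MapsTo y (Ici 0) K)
    (hy : ∀ t ∈ Ici (0 : ℝ), HasDerivWithinAt y (-∇ (f (lam (y t))) (y t)) (Ici 0) t) :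
    Tendsto y atTop (𝓝 ystar) ∧ Tendsto (fun t ↦ lam (y t)) atTop (𝓝 (lam ystar)) := by
  have hlim : Tendsto y atTop (𝓝 ystar) :=
    (isGradientFlow_valueFunction hf hlam hmin hy).tendsto_nhds_of_unique_critical
      (differentiable_valueFunction hf hlam hmin) hK hyK
      (continuous_gradient_valueFunction hf hlam hmin).continuousOn hcrit
  exact ⟨hlim, (hlam.tendsto ystar).comp hlim⟩

end ValueFunction

/-- Slow-timescale convergence: if `lam y` is a global minimizer of `f(·, y)` for each `y`,
the value function `g(y) = f(lam y, y)` has compact sublevel sets and a unique critical point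
`y*`, then every solution of `y' = -∇_y f(lam(y), y)` on `[0, ∞)` converges to `y*`, and
`lam(y(t)) → lam(y*)`. -/
theorem slow_ode_converges
    {d s : ℕ}
    (f : EuclideanSpace ℝ (Fin d) → EuclideanSpace ℝ (Fin s) → ℝ)
    (hf : ContDiff ℝ 1 (fun p : EuclideanSpace ℝ (Fin d) × EuclideanSpace ℝ (Fin s) =>
      f p.1 p.2))
    (lam : EuclideanSpace ℝ (Fin s) → EuclideanSpace ℝ (Fin d))
    (hlam : Differentiable ℝ lam)
    (hmin : ∀ (y : EuclideanSpace ℝ (Fin s)) (x : EuclideanSpace ℝ (Fin d)),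
      f (lam y) y ≤ f x y)
    (hsub : ∀ c : ℝ, IsCompact {y : EuclideanSpace ℝ (Fin s) | f (lam y) y ≤ c})
    (ystar : EuclideanSpace ℝ (Fin s))
    (hcrit : ∀ y : EuclideanSpace ℝ (Fin s),
      gradient (fun y' => f (lam y') y') y = 0 ↔ y = ystar)
    (y : ℝ → EuclideanSpace ℝ (Fin s))
    (hy : ∀ t ∈ Set.Ici (0 : ℝ),
      HasDerivWithinAt y (-(gradient (fun y' => f (lam (y t)) y') (y t))) (Set.Ici 0) t) :
    Filter.Tendsto y Filter.atTop (nhds ystar) ∧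
    Filter.Tendsto (fun t => lam (y t)) Filter.atTop (nhds (lam ystar)) := by
  have hflow := isGradientFlow_valueFunction hf hlam.continuous hmin hy
  have hanti := hflow.antitoneOn_comp (differentiable_valueFunction hf hlam.continuous hmin)
  exact slow_ode_converges_general hf hlam.continuous hmin (hsub _) (fun z _ ↦ (hcrit z).1)
    (fun _ ht ↦ hanti self_mem_Ici ht ht) hy
end

section
/- Let h : ℝ^d → ℝ be twice continuously differentiable and real analytic on a neighborhood of a point x*. Suppose x* is an isolated local minimum of h, i.e., x* is a local minimum of h and some open neighborhood of x* contains no local minimum of h other than x*. Then x* is a Lyapunov stable equilibrium of the gradient flow x′(t) = −∇h(x(t)); that is, ∇h(x*) = 0 and for every ε > 0 there exists δ > 0 such that every solution x : [0,∞) → ℝ^d of x′(t) = −∇h(x(t)) with ‖x(0) − x*‖ < δ satisfies ‖x(t) − x*‖ < ε for all t ≥ 0. -/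
/-!
A local minimum that is isolated among the local minima is strict, since any nearby point with the
same value would itself be a local minimum. Hence `h` is a Lyapunov function of its gradient flow:
on a small sphere around the minimum it is bounded below by some `m > h xstar`, and a trajectory
that starts where `h < m` cannot reach the sphere, because `h` decreases along it.
-/

open Filter Metric Set
open scoped Gradient Topology

theorem eventually_lt_of_isolated_isLocalMin {X β : Type*} [TopologicalSpace X] [PartialOrder β]
    {f : X → β} {a : X} (hmin : IsLocalMin f a)
    (hisolated : ∀ᶠ x in 𝓝 a, IsLocalMin f x → x = a) :
    ∀ᶠ x in 𝓝[≠] a, f a < f x := by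
  have hnear : ∀ᶠ x in 𝓝 a, ∀ᶠ y in 𝓝 x, f a ≤ f y := eventually_eventually_nhds.2 hmin
  rw [eventually_nhdsWithin_iff]
  filter_upwards [hnear, hisolated] with x hx hunique hne
  refine lt_of_le_of_ne hx.self_of_nhds fun heq => hne (hunique ?_)
  rwa [heq] at hx

theorem exists_eq_and_forall_le_of_continuousOn_Icc {α δ : Type*}
    [ConditionallyCompleteLinearOrder α] [DenselyOrdered α] [TopologicalSpace α] [OrderTopology α]
    [LinearOrder δ] [TopologicalSpace δ] [OrderClosedTopology δ]
    {f : α → δ} {a b : α} {c : δ} (hab : a ≤ b) (hf : ContinuousOn f (Icc a b))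
    (ha : f a ≤ c) (hb : c ≤ f b) :
    ∃ s ∈ Icc a b, f s = c ∧ ∀ u ∈ Icc a s, f u ≤ c := by
  have hcompact : IsCompact (Icc a b ∩ f ⁻¹' {c}) :=
    isCompact_Icc.of_isClosed_subset (hf.preimage_isClosed_of_isClosed isClosed_Icc
      isClosed_singleton) inter_subset_left
  obtain ⟨s, ⟨hs, hfs⟩, hfirst⟩ :=
    hcompact.exists_isLeast (intermediate_value_Icc hab hf ⟨ha, hb⟩)
  refine ⟨s, hs, hfs, fun u hu => le_of_not_gt fun hcu => ?_⟩
  have hub : u ≤ b := hu.2.trans hs.2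
  obtain ⟨w, hw, hfw⟩ :=
    intermediate_value_Icc hu.1 (hf.mono (Icc_subset_Icc_right hub)) ⟨ha, hcu.le⟩
  have hsw : s ≤ w := hfirst ⟨⟨hw.1, hw.2.trans hub⟩, hfw⟩
  have hwu : w = u := hw.2.antisymm (hu.2.trans hsw)
  exact hcu.ne' (hwu ▸ hfw)

section Lyapunov

variable {E : Type*} [NormedAddCommGroup E] [NormedSpace ℝ E]

/-- Lyapunov stability of the point `a` for the autonomous equation `x' = v x`: trajectories
starting close to `a` stay close to `a` for all forward time. That `a` is an equilibrium, `v a = 0`,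
is not part of the definition, and only solutions existing on all of `[0, ∞)` are considered. -/
def IsLyapunovStable (v : E → E) (a : E) : Prop :=
  ∀ ε > (0 : ℝ), ∃ δ > (0 : ℝ), ∀ x : ℝ → E, IsIntegralCurveOn x (fun _ => v) (Ici 0) →
    ‖x 0 - a‖ < δ → ∀ t ∈ Ici (0 : ℝ), ‖x t - a‖ < ε

variable {V : E → ℝ}

theorem antitoneOn_comp_of_isIntegralCurveOn {v : ℝ → E → E} {x : ℝ → E} {s : Set ℝ}
    (hs : Convex ℝ s) (hx : IsIntegralCurveOn x v s) (hV : ∀ t ∈ s, DifferentiableAt ℝ V (x t))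
    (hdecr : ∀ t ∈ s, fderiv ℝ V (x t) (v t (x t)) ≤ 0) :
    AntitoneOn (V ∘ x) s := by
  have hderiv : ∀ t ∈ s, HasDerivWithinAt (V ∘ x) (fderiv ℝ V (x t) (v t (x t))) s t :=
    fun t ht => (hV t ht).hasFDerivAt.comp_hasDerivWithinAt t (hx t ht)
  exact antitoneOn_of_hasDerivWithinAt_nonpos hs
    (fun t ht => (hderiv t ht).continuousWithinAt)
    (fun t ht => (hderiv t (interior_subset ht)).mono interior_subset)
    (fun t ht => hdecr t (interior_subset ht))

variable {v : E → E} {a : E}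

theorem norm_sub_lt_of_lt_on_sphere {r m : ℝ} {x : ℝ → E}
    (hV : ∀ y ∈ closedBall a r, DifferentiableAt ℝ V y)
    (hdecr : ∀ y ∈ closedBall a r, fderiv ℝ V y (v y) ≤ 0)
    (hm : ∀ y ∈ sphere a r, m ≤ V y)
    (hx : IsIntegralCurveOn x (fun _ => v) (Ici 0))
    (hx₀ : ‖x 0 - a‖ < r) (hVx₀ : V (x 0) < m) {t : ℝ} (ht : 0 ≤ t) :
    ‖x t - a‖ < r := by
  by_contra! hexit
  have hcont : ContinuousOn (fun s => ‖x s - a‖) (Icc 0 t) := fun s hs =>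
    (((hx s hs.1).continuousWithinAt.mono Icc_subset_Ici_self).sub_const a).norm
  obtain ⟨s, hs, hsr, hinside⟩ :=
    exists_eq_and_forall_le_of_continuousOn_Icc ht hcont hx₀.le hexit
  have hball : ∀ u ∈ Icc 0 s, x u ∈ closedBall a r := fun u hu =>
    mem_closedBall_iff_norm.2 (hinside u hu)
  have hanti : AntitoneOn (V ∘ x) (Icc 0 s) :=
    antitoneOn_comp_of_isIntegralCurveOn (convex_Icc 0 s) (hx.mono Icc_subset_Ici_self)
      (fun u hu => hV _ (hball u hu)) (fun u hu => hdecr _ (hball u hu))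
  have hVx : V (x s) ≤ V (x 0) := hanti (left_mem_Icc.2 hs.1) (right_mem_Icc.2 hs.1) hs.1
  exact (hm _ (mem_sphere_iff_norm.2 hsr)).not_gt (hVx.trans_lt hVx₀)

theorem isLyapunovStable_of_lyapunovFunction [ProperSpace E]
    (hV : ∀ᶠ y in 𝓝 a, DifferentiableAt ℝ V y) (hpos : ∀ᶠ y in 𝓝[≠] a, V a < V y)
    (hdecr : ∀ᶠ y in 𝓝 a, fderiv ℝ V y (v y) ≤ 0) :
    IsLyapunovStable v a := by
  intro ε hε
  obtain ⟨ρ, hρ, hgood⟩ := nhds_basis_closedBall.eventually_iff.1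
    (hV.and ((eventually_nhdsWithin_iff.1 hpos).and hdecr))
  obtain ⟨r, hr, hrρε⟩ := exists_between (lt_min hρ hε)
  obtain ⟨hrρ, hrε⟩ := lt_min_iff.1 hrρε
  have hgood_r : ∀ y ∈ closedBall a r,
      DifferentiableAt ℝ V y ∧ (y ≠ a → V a < V y) ∧ fderiv ℝ V y (v y) ≤ 0 :=
    fun y hy => hgood (closedBall_subset_closedBall hrρ.le hy)
  obtain ⟨m, ham, hm⟩ : ∃ m, V a < m ∧ ∀ y ∈ sphere a r, m ≤ V y :=
    (isCompact_sphere a r).exists_forall_le'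
      (fun y hy => (hgood_r y (sphere_subset_closedBall hy)).1.continuousAt.continuousWithinAt)
      (fun y hy => (hgood_r y (sphere_subset_closedBall hy)).2.1 (ne_of_mem_sphere hy hr.ne'))
  obtain ⟨δ, hδ, hstart⟩ := nhds_basis_ball.eventually_iff.1
    (hV.self_of_nhds.continuousAt.eventually_lt_const ham)
  refine ⟨min δ r, lt_min hδ hr, fun x hx hx₀ t ht => ?_⟩
  obtain ⟨hx₀δ, hx₀r⟩ := lt_min_iff.1 hx₀
  have hstay : ‖x t - a‖ < r :=
    norm_sub_lt_of_lt_on_sphere (fun y hy => (hgood_r y hy).1) (fun y hy => (hgood_r y hy).2.2)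
      hm hx hx₀r (hstart (mem_ball_iff_norm.2 hx₀δ)) ht
  exact hstay.trans hrε

end Lyapunov

theorem fderiv_neg_gradient_nonpos {E : Type*} [NormedAddCommGroup E] [InnerProductSpace ℝ E]
    [CompleteSpace E] (h : E → ℝ) (y : E) : fderiv ℝ h y (-∇ h y) ≤ 0 := by
  rw [map_neg, ← inner_gradient_left, neg_nonpos]
  exact real_inner_self_nonneg

theorem isolated_analytic_local_min_is_lyapunov_stable_general {E : Type*}
    [NormedAddCommGroup E] [InnerProductSpace ℝ E] [ProperSpace E] {h : E → ℝ} {xstar : E}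
    (hdiff : ∀ᶠ y in 𝓝 xstar, DifferentiableAt ℝ h y) (hmin : IsLocalMin h xstar)
    (hisolated : ∀ᶠ y in 𝓝 xstar, IsLocalMin h y → y = xstar) :
    ∇ h xstar = 0 ∧ IsLyapunovStable (fun y => -∇ h y) xstar := by
  have hcritical : ∇ h xstar = 0 := by rw [gradient, hmin.fderiv_eq_zero, map_zero]
  exact ⟨hcritical, isLyapunovStable_of_lyapunovFunction hdiff
    (eventually_lt_of_isolated_isLocalMin hmin hisolated)
    (.of_forall (fderiv_neg_gradient_nonpos h))⟩

/-- An isolated local minimum of a `C²` function that is real analytic near the point is a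
Lyapunov stable equilibrium of the gradient flow `x' = -∇h(x)`. -/
theorem isolated_analytic_local_min_is_lyapunov_stable
    {d : ℕ}
    (h : EuclideanSpace ℝ (Fin d) → ℝ) (hC2 : ContDiff ℝ 2 h)
    (xstar : EuclideanSpace ℝ (Fin d))
    (hanalytic : ∃ U : Set (EuclideanSpace ℝ (Fin d)),
      IsOpen U ∧ xstar ∈ U ∧ AnalyticOnNhd ℝ h U)
    (hmin : IsLocalMin h xstar)
    (hisolated : ∃ U : Set (EuclideanSpace ℝ (Fin d)),
      IsOpen U ∧ xstar ∈ U ∧ ∀ x ∈ U, IsLocalMin h x → x = xstar) :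
    gradient h xstar = 0 ∧
    ∀ ε > (0 : ℝ), ∃ δ > (0 : ℝ), ∀ x : ℝ → EuclideanSpace ℝ (Fin d),
      (∀ t ∈ Set.Ici (0 : ℝ),
        HasDerivWithinAt x (-(gradient h (x t))) (Set.Ici 0) t) →
      ‖x 0 - xstar‖ < δ → ∀ t ∈ Set.Ici (0 : ℝ), ‖x t - xstar‖ < ε := by
  obtain ⟨U, hU, hxU, hunique⟩ := hisolated
  exact isolated_analytic_local_min_is_lyapunov_stable_general
    (.of_forall (hC2.differentiable two_ne_zero)) hmin
    (mem_of_superset (hU.mem_nhds hxU) hunique)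
end

section
/- Let h : ℝ^n → ℝ^n be Lipschitz with constant L > 0, let T > 0 and b > 0, let z : [0, T] → ℝ^n be a solution of the ODE z′(t) = h(z(t)) with z(0) = z₀, and define the Euler iterates z_0 := z₀, z_{k+1} := z_k + b·h(z_k). Let M := sup_{t ∈ [0,T]} ‖h(z(t))‖. Then for every integer k with k·b ≤ T, the discretization error satisfies ‖z_k − z(k·b)‖ ≤ (M/2)(e^{LT} − 1)·b. -/
/-!
Along a solution, `t ↦ h (z t)` varies by at most `L * M * (t - a)` on `[a, t]`, so one Euler step
started on the solution misses it by at most `L * M * b ^ 2 / 2`, while the step map itself expands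
distances by at most `1 + L * b`. The errors `e k` thus satisfy
`e (k + 1) ≤ (1 + L * b) * e k + L * M * b ^ 2 / 2`. The affine map on the right has the fixed point
`-(M / 2 * b)`, so the shifted error `e k + M / 2 * b` grows at most geometrically with ratio
`1 + L * b ≤ exp (L * b)`.
-/

open Set
open scoped NNReal

section Euler

variable {E : Type*} [NormedAddCommGroup E] [NormedSpace ℝ E]

theorem norm_image_sub_sub_smul_le_of_norm_deriv_sub_le_segment {f f' : ℝ → E} {a b C : ℝ} {v : E}
    (hf : ∀ t ∈ Icc a b, HasDerivWithinAt f (f' t) (Icc a b) t)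
    (bound : ∀ t ∈ Ico a b, ‖f' t - v‖ ≤ C * (t - a)) :
    ∀ t ∈ Icc a b, ‖f t - f a - (t - a) • v‖ ≤ C * (t - a) ^ 2 / 2 := by
  have hcont : ContinuousOn f (Icc a b) := fun t ht ↦ (hf t ht).continuousWithinAt
  have hderiv : ∀ t ∈ Ico a b,
      HasDerivWithinAt (fun t ↦ f t - f a - (t - a) • v) (f' t - v) (Ici t) t := by
    intro t ht
    have hf_right : HasDerivWithinAt f (f' t) (Ici t) t :=
      (hf t (Ico_subset_Icc_self ht)).mono_of_mem_nhdsWithin (Icc_mem_nhdsGE_of_mem ht)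
    have hlin : HasDerivWithinAt (fun t ↦ (t - a) • v) v (Ici t) t := by
      simpa only [id, one_smul] using ((hasDerivWithinAt_id t _).sub_const a).smul_const v
    exact (hf_right.sub_const (f a)).sub hlin
  have hquad : ∀ t, HasDerivAt (fun t ↦ C * (t - a) ^ 2 / 2) (C * (t - a)) t := fun t ↦
    (((((hasDerivAt_id t).sub_const a).pow 2).const_mul C).div_const 2).congr_deriv <| by
      simp only [id, Nat.cast_ofNat]
      ring
  intro t ht
  exact image_norm_le_of_norm_deriv_right_le_deriv_boundary (by fun_prop) hderiv (by simp) hquad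
    bound ht

/-- The step map `x ↦ x + b • h x` of the explicit Euler method with step size `b` for the
autonomous equation `z' = h z`. -/
def eulerStep (h : E → E) (b : ℝ) (x : E) : E := x + b • h x

variable {h : E → E} {L : ℝ≥0} {s : Set E} {z : ℝ → E} {a b M : ℝ}

theorem norm_eulerStep_sub_eulerStep_le (hLip : LipschitzOnWith L h s) (hb : 0 ≤ b) {x y : E}
    (hx : x ∈ s) (hy : y ∈ s) :
    ‖eulerStep h b x - eulerStep h b y‖ ≤ (1 + L * b) * ‖x - y‖ :=
  calc ‖eulerStep h b x - eulerStep h b y‖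
      = ‖(x - y) + b • (h x - h y)‖ := by
        rw [eulerStep, eulerStep, add_sub_add_comm, smul_sub]
    _ ≤ ‖x - y‖ + b * ‖h x - h y‖ := by
        simpa only [norm_smul, Real.norm_of_nonneg hb] using norm_add_le (x - y) (b • (h x - h y))
    _ ≤ ‖x - y‖ + b * (L * ‖x - y‖) := by
        gcongr
        exact hLip.norm_sub_le hx hy
    _ = (1 + L * b) * ‖x - y‖ := by ring

theorem norm_eulerStep_self_sub_solution_le (hLip : LipschitzOnWith L h s) (hb : 0 ≤ b)
    (hz : ∀ t ∈ Icc a (a + b), HasDerivWithinAt z (h (z t)) (Icc a (a + b)) t)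
    (hzs : MapsTo z (Icc a (a + b)) s) (hM : ∀ t ∈ Icc a (a + b), ‖h (z t)‖ ≤ M) :
    ‖eulerStep h b (z a) - z (a + b)‖ ≤ L * M * b ^ 2 / 2 := by
  have hab : a ≤ a + b := le_add_of_nonneg_right hb
  have hspeed : ∀ t ∈ Icc a (a + b), ‖z t - z a‖ ≤ M * (t - a) :=
    norm_image_sub_le_of_norm_deriv_le_segment' hz fun t ht ↦ hM t (Ico_subset_Icc_self ht)
  have hfield : ∀ t ∈ Ico a (a + b), ‖h (z t) - h (z a)‖ ≤ L * M * (t - a) := by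
    intro t ht
    have ht' := Ico_subset_Icc_self ht
    calc ‖h (z t) - h (z a)‖ ≤ L * ‖z t - z a‖ :=
          hLip.norm_sub_le (hzs ht') (hzs (left_mem_Icc.2 hab))
      _ ≤ L * (M * (t - a)) := by gcongr; exact hspeed t ht'
      _ = L * M * (t - a) := by ring
  simpa only [eulerStep, add_sub_cancel_left, sub_sub, norm_sub_rev] using
    norm_image_sub_sub_smul_le_of_norm_deriv_sub_le_segment hz hfield (a + b) (right_mem_Icc.2 hab)

theorem norm_eulerStep_sub_solution_le (hLip : LipschitzOnWith L h s) (hb : 0 ≤ b)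
    (hz : ∀ t ∈ Icc a (a + b), HasDerivWithinAt z (h (z t)) (Icc a (a + b)) t)
    (hzs : MapsTo z (Icc a (a + b)) s) (hM : ∀ t ∈ Icc a (a + b), ‖h (z t)‖ ≤ M)
    {x : E} (hx : x ∈ s) :
    ‖eulerStep h b x - z (a + b)‖ ≤ (1 + L * b) * ‖x - z a‖ + L * M * b ^ 2 / 2 :=
  have hza : z a ∈ s := hzs (left_mem_Icc.2 (le_add_of_nonneg_right hb))
  (norm_sub_le_norm_sub_add_norm_sub _ (eulerStep h b (z a)) _).trans <|
    add_le_add (norm_eulerStep_sub_eulerStep_le hLip hb hx hza)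
      (norm_eulerStep_self_sub_solution_le hLip hb hz hzs hM)

variable {T : ℝ} {zk : ℕ → E} {k : ℕ}

theorem norm_euler_sub_solution_add_le_geom (hLip : LipschitzOnWith L h s) (hb : 0 ≤ b)
    (hz : ∀ t ∈ Icc 0 T, HasDerivWithinAt z (h (z t)) (Icc 0 T) t)
    (hzs : MapsTo z (Icc 0 T) s) (hM : ∀ t ∈ Icc 0 T, ‖h (z t)‖ ≤ M)
    (hzk : ∀ j < k, zk (j + 1) = eulerStep h b (zk j)) (hzks : ∀ j < k, zk j ∈ s)
    (hk : k * b ≤ T) :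
    ‖zk k - z (k * b)‖ + M / 2 * b ≤ (1 + L * b) ^ k * (‖zk 0 - z 0‖ + M / 2 * b) := by
  have hstep : ∀ j < k, ‖zk (j + 1) - z ((j + 1 : ℕ) * b)‖ + M / 2 * b ≤
      (1 + L * b) * (‖zk j - z (j * b)‖ + M / 2 * b) := by
    intro j hj
    have hnext : ((j + 1 : ℕ) : ℝ) * b = j * b + b := by push_cast; ring
    have hsub : Icc (j * b) (j * b + b) ⊆ Icc 0 T := by
      refine Icc_subset_Icc (by positivity) (hnext ▸ le_trans ?_ hk)
      gcongr
      exact hj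
    have herror := norm_eulerStep_sub_solution_le hLip hb
      (fun t ht ↦ (hz t (hsub ht)).mono hsub) (hzs.mono_left hsub)
      (fun t ht ↦ hM t (hsub ht)) (hzks j hj)
    rw [hzk j hj, hnext]
    linear_combination herror
  simpa only [Nat.cast_zero, zero_mul] using
    le_geom (u := fun j ↦ ‖zk j - z (j * b)‖ + M / 2 * b) (by positivity) k hstep

theorem one_add_mul_pow_le_exp (hb : 0 ≤ b) (hk : k * b ≤ T) :
    (1 + L * b) ^ k ≤ Real.exp (L * T) :=
  calc (1 + L * b) ^ k ≤ Real.exp (L * b) ^ k := by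
        gcongr
        rw [add_comm]
        exact Real.add_one_le_exp _
    _ = Real.exp (L * (k * b)) := by rw [← Real.exp_nat_mul, mul_left_comm]
    _ ≤ Real.exp (L * T) := by gcongr

theorem euler_discretization_error_general (hLip : LipschitzOnWith L h s) (hb : 0 ≤ b)
    (hz : ∀ t ∈ Icc 0 T, HasDerivWithinAt z (h (z t)) (Icc 0 T) t)
    (hzs : MapsTo z (Icc 0 T) s) (hM : ∀ t ∈ Icc 0 T, ‖h (z t)‖ ≤ M)
    (hzk : ∀ j < k, zk (j + 1) = eulerStep h b (zk j)) (hzks : ∀ j < k, zk j ∈ s)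
    (hk : k * b ≤ T) :
    ‖zk k - z (k * b)‖ ≤
      Real.exp (L * T) * ‖zk 0 - z 0‖ + M / 2 * (Real.exp (L * T) - 1) * b := by
  have hT : 0 ≤ T := le_trans (by positivity) hk
  have hM0 : 0 ≤ M := (norm_nonneg _).trans (hM 0 (left_mem_Icc.2 hT))
  have hshifted : ‖zk k - z (k * b)‖ + M / 2 * b ≤
      Real.exp (L * T) * (‖zk 0 - z 0‖ + M / 2 * b) :=
    (norm_euler_sub_solution_add_le_geom hLip hb hz hzs hM hzk hzks hk).trans <|
      mul_le_mul_of_nonneg_right (one_add_mul_pow_le_exp hb hk) (by positivity)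
  linear_combination hshifted

end Euler

/-- Euler discretization error bound: for an `L`-Lipschitz vector field `h`, a solution `z`
of `z' = h(z)` on `[0, T]` with `z 0 = z₀`, the Euler iterates with step `b` satisfy
`‖z_k - z(k b)‖ ≤ (M/2)(e^{LT} - 1) b` whenever `k b ≤ T`, where
`M = sup_{t ∈ [0,T]} ‖h (z t)‖`. -/
theorem euler_discretization_error
    {n : ℕ}
    (h : EuclideanSpace ℝ (Fin n) → EuclideanSpace ℝ (Fin n))
    (L : ℝ) (hL : 0 < L)
    (hLip : ∀ u v : EuclideanSpace ℝ (Fin n), ‖h u - h v‖ ≤ L * ‖u - v‖)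
    (T b : ℝ) (hT : 0 < T) (hb : 0 < b)
    (z : ℝ → EuclideanSpace ℝ (Fin n)) (z₀ : EuclideanSpace ℝ (Fin n))
    (hz0 : z 0 = z₀)
    (hz : ∀ t ∈ Set.Icc (0 : ℝ) T, HasDerivWithinAt z (h (z t)) (Set.Icc 0 T) t)
    (zk : ℕ → EuclideanSpace ℝ (Fin n))
    (hzk0 : zk 0 = z₀)
    (hzk : ∀ k : ℕ, zk (k + 1) = zk k + b • h (zk k))
    (M : ℝ) (hM : M = sSup ((fun t => ‖h (z t)‖) '' Set.Icc (0 : ℝ) T)) :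
    ∀ k : ℕ, (k : ℝ) * b ≤ T →
      ‖zk k - z ((k : ℝ) * b)‖ ≤ (M / 2) * (Real.exp (L * T) - 1) * b := by
  lift L to ℝ≥0 using hL.le
  have hLip' : LipschitzWith L h := .of_dist_le_mul (by simpa only [dist_eq_norm] using hLip)
  have hcont : ContinuousOn (fun t ↦ ‖h (z t)‖) (Icc 0 T) :=
    (hLip'.continuous.comp_continuousOn fun t ht ↦ (hz t ht).continuousWithinAt).norm
  intro k hk
  simpa only [hzk0, hz0, sub_self, norm_zero, mul_zero, zero_add] using
    euler_discretization_error_general hLip'.lipschitzOnWith hb.le hz (mapsTo_univ z _)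
      (fun t ht ↦ hM ▸ hcont.le_sSup_image_Icc ht) (fun j _ ↦ hzk j) (fun j _ ↦ mem_univ (zk j)) hk
end
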